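/- Let (R, m) be a Noetherian local ring, M a finitely generated R-module of Krull dimension t ≥ 1, and Q a parameter ideal of M such that m M = Q M. Then for all sufficiently large n, ℓ_R((Q^{n+1}M :_M m)/Q^{n+1}M) = ℓ_R(Q^n M/Q^{n+1}M) + ℓ_R(0 :_M m); in particular, if t ≥ 2 then the irreducible multiplicity f⁰_Q(M) equals the Hilbert multiplicity e⁰_Q(M). -/

import Mathlib

open IsLocalRing Submodule

/-- The colon submodule `(N :_M J) = {x ∈ M ∣ J x ⊆ N}`. -/
def Submodule.colonBy {R M : Type*} [CommRing R] [AddCommGroup M] [Module R M]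
    (N : Submodule R M) (J : Ideal R) : Submodule R M where
  carrier := {x | ∀ r ∈ J, r • x ∈ N}
  add_mem' := fun {a b} ha hb r hr => by
    rw [smul_add]; exact N.add_mem (ha r hr) (hb r hr)
  zero_mem' := fun r hr => by rw [smul_zero]; exact N.zero_mem
  smul_mem' := fun c {x} hx r hr => by
    rw [smul_comm]; exact N.smul_mem c (hx r hr)

/-- The length of a module: the height of `⊤` in its lattice of submodules. -/
noncomputable def moduleLength (R M : Type*) [Ring R] [AddCommGroup M] [Module R M] : ℕ∞ :=
  Order.height (⊤ : Submodule R M)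

/-- The minimal number of generators of a module. -/
noncomputable def muGen (R M : Type*) [Ring R] [AddCommGroup M] [Module R M] : ℕ :=
  sInf {n | ∃ s : Finset M, s.card = n ∧ Submodule.span R (s : Set M) = ⊤}

/-- The depth of a module over a local ring: the supremum of lengths of `M`-regular
sequences consisting of elements of the maximal ideal. -/
noncomputable def depthM (R M : Type*) [CommRing R] [IsLocalRing R]
    [AddCommGroup M] [Module R M] : ℕ :=
  sSup {n | ∃ rs : List R, rs.length = n ∧ (∀ r ∈ rs, r ∈ maximalIdeal R) ∧
    RingTheory.Sequence.IsRegular M rs}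

/-- `Q` is a parameter ideal of `M` (of dimension `t`): it is generated by `t` elements of
the maximal ideal and `M/QM` has finite length. -/
def IsParameterIdeal (R M : Type*) [CommRing R] [IsLocalRing R]
    [AddCommGroup M] [Module R M] (t : ℕ) (Q : Ideal R) : Prop :=
  Q ≤ maximalIdeal R ∧ ∃ s : Finset R, s.card = t ∧ Q = Ideal.span (s : Set R) ∧
    moduleLength R (M ⧸ (Q • ⊤ : Submodule R M)) ≠ ⊤

theorem aux_poly (t : ℕ) (ht : 2 ≤ t) (P G : Polynomial ℚ) (hP : P.natDegree = t)
    (hG : G.natDegree = t - 1) (c : ℚ) (N : ℕ)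
    (h : ∀ n : ℕ, n ≥ N → G.eval ((n : ℚ) + 1) = P.eval ((n : ℚ) + 1) - P.eval (n : ℚ) + c) :
    ((t - 1).factorial : ℚ) * G.leadingCoeff = (t.factorial : ℚ) * P.leadingCoeff := by
  obtain ⟨s, rfl⟩ : ∃ s, t = s + 2 := ⟨t - 2, by omega⟩
  set H : Polynomial ℚ := Polynomial.taylor 1 G - Polynomial.C c with hH
  have hHP : H = Polynomial.taylor 1 P - P := by
    apply Polynomial.eq_of_infinite_eval_eq
    have hinf : Set.Infinite ((fun n : ℕ => (n : ℚ)) '' Set.Ici N) :=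
      (Set.Ici_infinite N).image (Nat.cast_injective.injOn)
    refine hinf.mono ?_
    rintro _ ⟨n, hn, rfl⟩
    have := h n hn
    simp only [Set.mem_setOf_eq, hH, Polynomial.eval_sub, Polynomial.taylor_eval, Polynomial.eval_C]
    linarith
  have hdeg : H.natDegree = s + 1 := by
    rw [hH, Polynomial.natDegree_sub_C, Polynomial.natDegree_taylor, hG]; omega
  have hlc : H.leadingCoeff = G.leadingCoeff := by
    rw [Polynomial.leadingCoeff, hdeg, hH, Polynomial.coeff_sub, Polynomial.coeff_C_succ, sub_zero]
    have : s + 1 = G.natDegree := by rw [hG]; omega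
    rw [this, Polynomial.coeff_taylor_natDegree]
  have h1 := Polynomial.fwdDiff_iter_degree_eq_factorial P
  have h2 := Polynomial.fwdDiff_iter_degree_eq_factorial H
  have h3 : fwdDiff 1 P.eval = H.eval := by
    funext x
    rw [hHP]
    simp [fwdDiff, Polynomial.taylor_eval, add_comm]
  rw [hP, Function.iterate_succ_apply, h3] at h1
  rw [hdeg, h1, hlc] at h2
  have := congrFun h2 0
  simp at this
  simp only [Nat.add_succ_sub_one]
  linarith

theorem aux_filt {R M : Type*} [CommRing R] [IsNoetherianRing R]
    [AddCommGroup M] [Module R M] [Module.Finite R M] (I : Ideal R) :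
    ∃ k : ℕ, ∀ j ≥ k, ∀ x ∈ (I ^ j • ⊤ : Submodule R M),
      (∀ r ∈ I, r • x ∈ (I ^ (j + 2) • ⊤ : Submodule R M)) →
      x ∈ (I ^ (j + 1) • ⊤ : Submodule R M) := by
  have hanti : ∀ i, (I ^ (i + 1) • ⊤ : Submodule R M) ≤ I ^ i • ⊤ :=
    fun i => (I.stableFiltration (⊤ : Submodule R M)).mono i
  have hsm : ∀ i, ∀ r ∈ I, ∀ x ∈ (I ^ i • ⊤ : Submodule R M),
      r • x ∈ (I ^ (i + 1) • ⊤ : Submodule R M) := fun i r hr x hx =>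
    (I.stableFiltration (⊤ : Submodule R M)).smul_le i (Submodule.smul_mem_smul hr hx)
  let F : I.Filtration M :=
    { N := fun j => (I ^ j • ⊤ : Submodule R M) ⊓ (I ^ (j + 2) • ⊤ : Submodule R M).colonBy I
      mono := fun i x hx => ⟨hanti i hx.1, fun r hr => hanti _ (hx.2 r hr)⟩
      smul_le := fun i => by
        rw [Submodule.smul_le]
        intro a ha x hx
        refine ⟨hsm i a ha x hx.1, fun r hr => ?_⟩
        rw [smul_comm]
        exact hsm _ a ha _ (hx.2 r hr) }
  have hF : F.Stable := (I.stableFiltration_stable (⊤ : Submodule R M)).of_le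
    (fun j => inf_le_left)
  obtain ⟨n₀, hn₀⟩ := hF
  refine ⟨n₀ + 1, fun j hj x hx hIx => ?_⟩
  obtain ⟨i, rfl⟩ : ∃ i, j = i + 1 := ⟨j - 1, by omega⟩
  have hxF : x ∈ F.N (i + 1) := ⟨hx, hIx⟩
  rw [← hn₀ i (by omega)] at hxF
  refine (Submodule.smul_le.mpr ?_ : I • F.N i ≤ _) hxF
  intro a ha y hy
  exact hy.2 a ha

theorem aux_pi {R M ι : Type*} [CommRing R] [AddCommGroup M] [Module R M] [Fintype ι]
    (J : Ideal R) (f : ι → M) (h : ∀ i, f i ∈ (J • ⊤ : Submodule R M)) :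
    f ∈ (J • ⊤ : Submodule R (ι → M)) := by
  classical
  have hf : f = ∑ i, LinearMap.single R (fun _ : ι => M) i (f i) := by
    simp only [LinearMap.coe_single]
    exact (Finset.univ_sum_single f).symm
  rw [hf]
  refine Submodule.sum_mem _ fun i _ => ?_
  have := Submodule.mem_map_of_mem (f := LinearMap.single R (fun _ : ι => M) i) (h i)
  rw [Submodule.map_smul''] at this
  exact Submodule.smul_mono le_rfl le_top this

theorem aux_colon {R M : Type*} [CommRing R] [IsNoetherianRing R]
    [AddCommGroup M] [Module R M] [Module.Finite R M] (I : Ideal R) :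
    ∃ N : ℕ, ∀ n ≥ N, (I ^ (n + 1) • ⊤ : Submodule R M).colonBy I
      = (I ^ n • ⊤ : Submodule R M) ⊔ (⊥ : Submodule R M).colonBy I := by
  obtain ⟨k, hk⟩ := aux_filt (M := M) I
  obtain ⟨s, hs⟩ := (isNoetherianRing_iff_ideal_fg R).mp inferInstance I
  let φ : M →ₗ[R] (s → M) := LinearMap.pi fun i => LinearMap.lsmul R M i
  obtain ⟨c, hc⟩ := I.exists_pow_inf_eq_pow_smul (LinearMap.range φ)
  have hanti : Antitone fun i => (I ^ i • ⊤ : Submodule R M) :=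
    (I.stableFiltration (⊤ : Submodule R M)).antitone
  have hsm : ∀ i, ∀ r ∈ I, ∀ x ∈ (I ^ i • ⊤ : Submodule R M),
      r • x ∈ (I ^ (i + 1) • ⊤ : Submodule R M) := fun i r hr x hx =>
    (I.stableFiltration (⊤ : Submodule R M)).smul_le i (Submodule.smul_mem_smul hr hx)
  refine ⟨c + k, fun n hn => le_antisymm ?_ (sup_le (fun x hx r hr => hsm n r hr x hx) ?_)⟩
  · intro x hx
    have h1 : φ x ∈ (I ^ (n + 1) • ⊤ ⊓ LinearMap.range φ : Submodule R (s → M)) := by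
      refine ⟨aux_pi _ _ fun i => hx _ ?_, ⟨x, rfl⟩⟩
      rw [← hs]; exact Submodule.subset_span i.2
    rw [hc _ (by omega)] at h1
    have h2 : φ x ∈ Submodule.map φ (I ^ (n + 1 - c) • ⊤ : Submodule R M) := by
      rw [Submodule.map_smul'', Submodule.map_top]
      exact Submodule.smul_mono le_rfl inf_le_right h1
    obtain ⟨y, hy, hyx⟩ := h2
    have hz : x - y ∈ (⊥ : Submodule R M).colonBy I := by
      intro r hr
      have : I ≤ LinearMap.ker ((LinearMap.lsmul R M).flip (x - y)) := by
        rw [← hs, Submodule.span_le]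
        intro a ha
        have := congrFun hyx ⟨a, ha⟩
        simp only [φ, LinearMap.pi_apply, LinearMap.lsmul_apply] at this
        simp [smul_sub, this]
      simpa using this hr
    have hyc : y ∈ (I ^ (n + 1) • ⊤ : Submodule R M).colonBy I := by
      have : y = x - (x - y) := by abel
      rw [this]
      exact Submodule.sub_mem _ hx fun r hr => by
        have := hz r hr
        rw [Submodule.mem_bot] at this
        rw [this]; exact Submodule.zero_mem _
    have key : ∀ j, n + 1 - c ≤ j → j ≤ n → y ∈ (I ^ j • ⊤ : Submodule R M) := by
      intro j hj
      induction j, hj using Nat.le_induction with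
      | base => intro _; exact hy
      | succ j hj ih =>
        intro hjn
        refine hk j (by omega) y (ih (by omega)) fun r hr => ?_
        exact hanti (by omega : j + 2 ≤ n + 1) (hyc r hr)
    have hyn : y ∈ (I ^ n • ⊤ : Submodule R M) := by
      rcases Nat.eq_zero_or_pos c with h0 | h0
      · exact hanti (by omega : n ≤ n + 1 - c) hy
      · exact key n (by omega) le_rfl
    have : x = y + (x - y) := by abel
    rw [this]
    exact Submodule.add_mem_sup hyn hz
  · intro x hx r hr
    have := hx r hr
    rw [Submodule.mem_bot] at this
    rw [this]; exact Submodule.zero_mem _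

theorem aux_disj {R M : Type*} [CommRing R] [IsNoetherianRing R]
    [AddCommGroup M] [Module R M] [Module.Finite R M] (I : Ideal R) :
    ∃ N : ℕ, ∀ n ≥ N, ∀ x ∈ (I ^ n • ⊤ : Submodule R M),
      x ∈ (⊥ : Submodule R M).colonBy I → x = 0 := by
  obtain ⟨c, hc⟩ := I.exists_pow_inf_eq_pow_smul ((⊥ : Submodule R M).colonBy I)
  refine ⟨c + 1, fun n hn x hx hx' => ?_⟩
  have h1 : x ∈ (I ^ n • ⊤ ⊓ (⊥ : Submodule R M).colonBy I : Submodule R M) := ⟨hx, hx'⟩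
  rw [hc n (by omega)] at h1
  refine (Submodule.mem_bot R).mp ((Submodule.smul_le.mpr ?_ :
    I ^ (n - c) • (I ^ c • ⊤ ⊓ (⊥ : Submodule R M).colonBy I) ≤ ⊥) h1)
  intro r hr y hy
  exact hy.2 r (Ideal.pow_le_self (by omega) hr)

theorem aux_len {R M : Type*} [CommRing R] [AddCommGroup M] [Module R M]
    (A B S : Submodule R M) (hBA : B ≤ A) (hS : ∀ x ∈ A, x ∈ S → x = 0) :
    moduleLength R (Submodule.map B.mkQ (A ⊔ S)) =
      moduleLength R (Submodule.map B.mkQ A) + moduleLength R S := by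
  simp only [moduleLength, ← Module.length_eq_height]
  rw [← Module.length_prod]
  symm
  refine LinearEquiv.length_eq (LinearEquiv.ofInjective
    ((Submodule.map B.mkQ A).subtype.coprod (B.mkQ.comp S.subtype)) ?_ |>.trans
      (LinearEquiv.ofEq _ _ ?_))
  · rw [← LinearMap.ker_eq_bot, LinearMap.ker_eq_bot']
    rintro ⟨⟨_, a, ha, rfl⟩, ⟨s, hs⟩⟩ h
    simp only [LinearMap.coprod_apply, Submodule.subtype_apply, LinearMap.comp_apply,
      ← map_add] at h
    rw [Submodule.mkQ_apply, Submodule.Quotient.mk_eq_zero] at h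
    have hsA : s ∈ A := by
      have := A.sub_mem (hBA h) ha
      simpa using this
    have hs0 := hS s hsA hs
    subst hs0
    rw [add_zero] at h
    ext
    · simpa using h
    · rfl
  · rw [LinearMap.range_coprod, Submodule.range_subtype, LinearMap.range_comp,
      Submodule.range_subtype, Submodule.map_sup]

theorem aux_quot {R M : Type*} [CommRing R] [AddCommGroup M] [Module R M]
    (A B : Submodule R M) (hBA : B ≤ A) :
    moduleLength R (M ⧸ B) =
      moduleLength R (Submodule.map B.mkQ A) + moduleLength R (M ⧸ A) := by
  simp only [moduleLength, ← Module.length_eq_height]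
  rw [← (Submodule.quotientQuotientEquivQuotient B A hBA).length_eq]
  exact Module.length_eq_add_of_exact (Submodule.map B.mkQ A).subtype (Submodule.map B.mkQ A).mkQ
    (Submodule.subtype_injective _) (Submodule.mkQ_surjective _)
    (LinearMap.exact_subtype_mkQ _)

/-- If `Q` is a parameter ideal of `M` (`dim M = t ≥ 1`) with `𝔪M = QM`, then eventually
`ℓ((Q^{n+1}M :_M 𝔪)/Q^{n+1}M) = ℓ(Q^n M/Q^{n+1}M) + ℓ(0 :_M 𝔪)`; in particular, when
`t ≥ 2` the irreducible multiplicity `f⁰_Q(M)` equals the Hilbert multiplicity `e⁰_Q(M)`. -/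
theorem statement17 {R M : Type*} [CommRing R] [IsNoetherianRing R] [IsLocalRing R]
    [AddCommGroup M] [Module R M] [Module.Finite R M]
    (t : ℕ) (ht : 1 ≤ t)
    (hdim : ringKrullDim (R ⧸ Module.annihilator R M) = t)
    (Q : Ideal R) (hQpar : IsParameterIdeal R M t Q)
    (hmQ : (maximalIdeal R) • (⊤ : Submodule R M) = Q • ⊤) :
    (∃ N : ℕ, ∀ n ≥ N,
      moduleLength R ↥(Submodule.map (Q ^ (n + 1) • ⊤ : Submodule R M).mkQ
          ((Q ^ (n + 1) • ⊤ : Submodule R M).colonBy (maximalIdeal R)))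
        = moduleLength R ↥(Submodule.map (Q ^ (n + 1) • ⊤ : Submodule R M).mkQ
            (Q ^ n • ⊤ : Submodule R M))
          + moduleLength R ↥((⊥ : Submodule R M).colonBy (maximalIdeal R))) ∧
    (2 ≤ t → ∀ P G : Polynomial ℚ, P.natDegree = t → G.natDegree = t - 1 →
      (∃ N : ℕ, ∀ n ≥ N, ∃ len : ℕ,
        moduleLength R (M ⧸ (Q ^ (n + 1) • ⊤ : Submodule R M)) = len ∧
          (len : ℚ) = P.eval (n : ℚ)) →
      (∃ N : ℕ, ∀ n ≥ N, ∃ len : ℕ,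
        moduleLength R ↥(Submodule.map (Q ^ (n + 1) • ⊤ : Submodule R M).mkQ
          ((Q ^ (n + 1) • ⊤ : Submodule R M).colonBy (maximalIdeal R))) = len ∧
          (len : ℚ) = G.eval (n : ℚ)) →
      ((t - 1).factorial : ℚ) * G.leadingCoeff = (t.factorial : ℚ) * P.leadingCoeff) := by
  have hpow : ∀ n : ℕ, (maximalIdeal R ^ n • ⊤ : Submodule R M) = Q ^ n • ⊤ := by
    intro n
    induction n with
    | zero => simp
    | succ n ih =>
      rw [pow_succ, mul_smul, hmQ, ← mul_smul, mul_comm, mul_smul, ih, ← mul_smul, ← pow_succ']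
  have hQanti : ∀ n : ℕ, (Q ^ (n + 1) • ⊤ : Submodule R M) ≤ Q ^ n • ⊤ := fun n =>
    (Q.stableFiltration (⊤ : Submodule R M)).mono n
  have first : ∃ N : ℕ, ∀ n ≥ N,
      moduleLength R ↥(Submodule.map (Q ^ (n + 1) • ⊤ : Submodule R M).mkQ
          ((Q ^ (n + 1) • ⊤ : Submodule R M).colonBy (maximalIdeal R)))
        = moduleLength R ↥(Submodule.map (Q ^ (n + 1) • ⊤ : Submodule R M).mkQ
            (Q ^ n • ⊤ : Submodule R M))
          + moduleLength R ↥((⊥ : Submodule R M).colonBy (maximalIdeal R)) := by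
    obtain ⟨N₁, h₁⟩ := aux_colon (M := M) (maximalIdeal R)
    obtain ⟨N₂, h₂⟩ := aux_disj (M := M) (maximalIdeal R)
    refine ⟨N₁ + N₂, fun n hn => ?_⟩
    have e := h₁ n (by omega)
    have d := h₂ n (by omega)
    rw [hpow, hpow] at e
    rw [hpow] at d
    rw [e]
    exact aux_len _ _ _ (hQanti n) d
  refine ⟨first, fun ht2 P G hP hG ⟨N₁, h₁⟩ ⟨N₂, h₂⟩ => ?_⟩
  obtain ⟨N₀, h₀⟩ := first
  have hs : ∃ s : ℕ, moduleLength R ↥((⊥ : Submodule R M).colonBy (maximalIdeal R)) = s := by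
    obtain ⟨l, hl, -⟩ := h₂ (N₀ + N₂) (by omega)
    have := h₀ (N₀ + N₂) (by omega)
    rw [hl] at this
    refine ⟨_, (ENat.coe_toNat ?_).symm⟩
    intro htop
    rw [htop, add_top] at this
    exact ENat.coe_ne_top _ this
  obtain ⟨s, hs⟩ := hs
  refine aux_poly t ht2 P G hP hG s (N₀ + N₁ + N₂) fun n hn => ?_
  obtain ⟨l, hl, hl'⟩ := h₂ (n + 1) (by omega)
  obtain ⟨p, hp, hp'⟩ := h₁ (n + 1) (by omega)
  obtain ⟨q, hq, hq'⟩ := h₁ n (by omega)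
  have e₀ := h₀ (n + 1) (by omega)
  have e₁ := aux_quot _ _ (hQanti (n + 1))
  rw [hl, hs] at e₀
  rw [hp, hq] at e₁
  push_cast at hl' hp'
  rw [← hl', ← hp', ← hq']
  generalize moduleLength R ↥(Submodule.map (Q ^ (n + 1 + 1) • ⊤ : Submodule R M).mkQ
            (Q ^ (n + 1) • ⊤ : Submodule R M)) = d at e₀ e₁
  induction d using ENat.recTopCoe with
  | top => rw [top_add] at e₀; exact absurd e₀ (ENat.coe_ne_top _)
  | coe d =>
    norm_cast at e₀ e₁
    subst e₀ e₁
    push_cast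
    ring
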